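/- Let G be a strongly connected directed graph with n nodes and unitary travel times, π > 0 a stationary distribution, and ε > 0 such that P^ε_{G,π} is nonempty. Then for every P ∈ P^ε_{G,π}, the return time entropy J(P) and the entropy rate H_rate(P) = −Σ_{i=1}^n π_i Σ_{j=1}^n p_{ij} log p_{ij} satisfy H_rate(P) ≤ J(P) ≤ n·H_rate(P). -/

import Mathlib

/-! Let `Q` be the transition matrix `P` with column `j` set to zero, so that
`F_{k+1}(·, j) = Q ^ k c` for the column `c` of `P` at `j`. Since `c = (1 - Q) 1` and
`π_j e_jᵀ = πᵀ (1 - Q)`, geometric sums give the two identities behind the proof,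
`∑_{k<K} Q ^ k c = 1 - Q ^ K 1` and `π_j e_jᵀ ∑_{k<K} Q ^ k = πᵀ (1 - Q ^ K)`.

Upper bound: applying subadditivity of `η(x) = -x log x` to `F_{k+2}(·, j) = Q F_{k+1}(·, j)`, the
vector `S_K = ∑_{k<K} η(F_{k+1}(·, j))` satisfies `S_{K+1} ≤ h + Q S_K`, where `h` is the vector of
entropies of the rows of `P`. As `πᵀ Q = πᵀ - π_j e_jᵀ` and `S_K ≤ S_{K+1}`, pairing with `π` leaves
`π_j S_K(j) ≤ H_rate`, for each `j`.

Lower bound: by Jensen's inequality for the subprobability `e_jᵀ Q ^ k`,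
`e_jᵀ Q ^ k η(c) ≤ η(F_{k+1}(j, j))`. Multiplied by `π_j` and summed over `k`, the left-hand sides
add up to `πᵀ η(c)`, because the remainder `πᵀ Q ^ K η(c)` vanishes in the limit: `η(c)` vanishes
wherever `c` does, and `Q ^ K c` tends to zero as the general term of a series bounded by `1`.
Finally the sum over `j` of `πᵀ η(c)` is `H_rate`. -/

open scoped BigOperators
open Real

/-- The set of Markov chains `ε`-conforming to a directed graph with adjacency
relation `Adj` and stationary distribution `pivec`. -/
def Conf {n : ℕ} (Adj : Fin n → Fin n → Prop) (pivec : Fin n → ℝ) (ε : ℝ) :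
    Set (Matrix (Fin n) (Fin n) ℝ) :=
  {P | (∀ i j, Adj i j → ε ≤ P i j) ∧ (∀ i j, ¬ Adj i j → P i j = 0) ∧
    (∀ i, ∑ j, P i j = 1) ∧ (∀ j, ∑ i, pivec i * P i j = pivec j)}

/-- First hitting time probabilities for unitary travel times:
`F_1 = P` and `F_k(i,j) = Σ_{h≠j} p_{ih} F_{k−1}(h,j)` for `k ≥ 2`. -/
def IsHittingProbUnit {n : ℕ} (P : Matrix (Fin n) (Fin n) ℝ)
    (F : ℕ → Fin n → Fin n → ℝ) : Prop :=
  (∀ i j, F 1 i j = P i j) ∧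
    ∀ k : ℕ, 2 ≤ k → ∀ i j,
      F k i j = ∑ h : Fin n, if h = j then 0 else P i h * F (k - 1) h j

/-- The entropy rate `H_rate(P) = −Σ_i π_i Σ_j p_{ij} log p_{ij}`. -/
noncomputable def entropyRate {n : ℕ} (pivec : Fin n → ℝ)
    (P : Matrix (Fin n) (Fin n) ℝ) : ℝ :=
  ∑ i : Fin n, pivec i * ∑ j : Fin n, Real.negMulLog (P i j)

open Finset Filter Topology Matrix

lemma negMulLog_sum_le_sum_negMulLog {α : Type*} {s : Finset α} {f : α → ℝ}
    (hf : ∀ a ∈ s, 0 ≤ f a) : negMulLog (∑ a ∈ s, f a) ≤ ∑ a ∈ s, negMulLog (f a) := by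
  rw [negMulLog, neg_mul, sum_mul, ← sum_neg_distrib]
  refine sum_le_sum fun a ha => ?_
  rw [negMulLog, neg_mul, neg_le_neg_iff]
  rcases (hf a ha).eq_or_lt with hzero | hpos
  · simp [← hzero]
  · gcongr
    exact single_le_sum hf ha

lemma sum_mul_le_map_sum_smul_of_concaveOn {α E : Type*} [AddCommGroup E] [Module ℝ E]
    {s : Set E} {f : E → ℝ} (hf : ConcaveOn ℝ s f) (hs : 0 ∈ s) (hf0 : 0 ≤ f 0) {t : Finset α}
    {w : α → ℝ} {x : α → E} (hw : ∀ a ∈ t, 0 ≤ w a) (hw1 : ∑ a ∈ t, w a ≤ 1)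
    (hx : ∀ a ∈ t, x a ∈ s) : ∑ a ∈ t, w a * f (x a) ≤ f (∑ a ∈ t, w a • x a) := by
  -- Put the missing mass at the point `0`.
  have hmissing : 0 ≤ 1 - ∑ a ∈ t, w a := sub_nonneg.2 hw1
  have hjensen := hf.map_add_sum_le hw (sub_add_cancel 1 _) hx hmissing hs
  rw [smul_zero, zero_add] at hjensen
  exact (le_add_of_nonneg_left (mul_nonneg hmissing hf0)).trans hjensen

section TransitionEntropy

variable {ι : Type*} [Fintype ι]

/-- The entropy of the distribution of the next state, given the current one; its average against a
stationary distribution is the entropy rate. -/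
noncomputable def transitionEntropy (P : Matrix ι ι ℝ) (i : ι) : ℝ :=
  ∑ h, negMulLog (P i h)

lemma dotProduct_transitionEntropy (p : ι → ℝ) (P : Matrix ι ι ℝ) :
    p ⬝ᵥ transitionEntropy P = ∑ j, p ⬝ᵥ fun i => negMulLog (P i j) := by
  simp only [dotProduct, transitionEntropy, mul_sum]
  exact sum_comm

end TransitionEntropy

section FirstPassage

variable {ι : Type*} [DecidableEq ι]

/-- The taboo matrix of the chain `P` with taboo state `j`: transitions into `j` are killed. The
entry `(i, h)` of its `k`-th power is the probability of going from `i` to `h` in `k` steps without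
entering `j`. -/
def taboo (P : Matrix ι ι ℝ) (j : ι) : Matrix ι ι ℝ := P.updateCol j 0

lemma taboo_apply (P : Matrix ι ι ℝ) (j i h : ι) :
    taboo P j i h = if h = j then 0 else P i h :=
  updateCol_apply

lemma taboo_nonneg {P : Matrix ι ι ℝ} (hP : ∀ i h, 0 ≤ P i h) (j i h : ι) :
    0 ≤ taboo P j i h := by
  rw [taboo_apply]
  split_ifs
  exacts [le_rfl, hP i h]

variable [Fintype ι] {P : Matrix ι ι ℝ} {p : ι → ℝ}

lemma taboo_pow_nonneg (hP : ∀ i h, 0 ≤ P i h) (j : ι) (k : ℕ) (i h : ι) :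
    0 ≤ (taboo P j ^ k) i h := by
  induction k generalizing h with
  | zero => rw [pow_zero, one_apply]; positivity
  | succ k ih =>
    rw [pow_succ, mul_apply]
    exact sum_nonneg fun l _ => mul_nonneg (ih l) (taboo_nonneg hP j l h)

lemma taboo_mulVec_one (hP : P *ᵥ 1 = 1) (j : ι) : taboo P j *ᵥ 1 = 1 - P.col j := by
  ext i
  have hrow : ∑ h, P i h = 1 := by simpa [mulVec, dotProduct] using congrFun hP i
  rw [Pi.sub_apply, Pi.one_apply, col_apply, ← hrow, ← sum_erase_eq_sub (mem_univ j)]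
  simp [mulVec, dotProduct, taboo_apply, sum_ite, filter_ne']

lemma vecMul_taboo (hp : p ᵥ* P = p) (j : ι) : p ᵥ* taboo P j = p - Pi.single j (p j) := by
  ext h
  rw [taboo, vecMul_updateCol, hp]
  rcases eq_or_ne h j with rfl | hj
  · simp
  · simp [hj]

/-- The vector of first passage probabilities into `j`, indexed by the starting state. Here `k`
counts the steps before the one entering `j`, so that `firstPassage P j k i` is `F_{k+1}(i, j)`. -/
def firstPassage (P : Matrix ι ι ℝ) (j : ι) (k : ℕ) : ι → ℝ := taboo P j ^ k *ᵥ P.col j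

lemma firstPassage_zero (P : Matrix ι ι ℝ) (j : ι) : firstPassage P j 0 = P.col j := by
  rw [firstPassage, pow_zero, one_mulVec]

lemma firstPassage_succ (P : Matrix ι ι ℝ) (j : ι) (k : ℕ) :
    firstPassage P j (k + 1) = taboo P j *ᵥ firstPassage P j k := by
  rw [firstPassage, firstPassage, mulVec_mulVec, pow_succ']

lemma firstPassage_nonneg (hP : ∀ i h, 0 ≤ P i h) (j : ι) (k : ℕ) (i : ι) :
    0 ≤ firstPassage P j k i :=
  sum_nonneg fun h _ => mul_nonneg (taboo_pow_nonneg hP j k i h) (hP h j)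

lemma sum_range_firstPassage (hP : P *ᵥ 1 = 1) (j : ι) (K : ℕ) :
    ∑ k ∈ range K, firstPassage P j k = 1 - taboo P j ^ K *ᵥ 1 := by
  have hcol : P.col j = (1 - taboo P j) *ᵥ 1 := by
    rw [sub_mulVec, one_mulVec, taboo_mulVec_one hP, sub_sub_cancel]
  simp only [firstPassage]
  rw [← sum_mulVec, hcol, mulVec_mulVec, geom_sum_mul_neg, sub_mulVec, one_mulVec]

/-- With `v` an indicator and `K → ∞`, this is the cycle formula for the stationary distribution of
an irreducible chain. -/
lemma dotProduct_eq_sum_range_taboo_pow_add (hp : p ᵥ* P = p) (j : ι) (v : ι → ℝ) (K : ℕ) :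
    p ⬝ᵥ v = p j * ∑ k ∈ range K, (taboo P j ^ k *ᵥ v) j + p ⬝ᵥ (taboo P j ^ K *ᵥ v) := by
  have hsingle : p ᵥ* (1 - taboo P j) = Pi.single j (p j) := by
    rw [vecMul_sub, vecMul_one, vecMul_taboo hp, sub_sub_cancel]
  rw [← Finset.sum_apply, ← sum_mulVec, ← single_dotProduct, ← hsingle, ← dotProduct_mulVec,
    mulVec_mulVec, mul_neg_geom_sum, sub_mulVec, one_mulVec, dotProduct_sub, sub_add_cancel]

lemma sum_taboo_pow_le_one (hP : P ∈ rowStochastic ℝ ι) (j : ι) (k : ℕ) (i : ι) :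
    ∑ h, (taboo P j ^ k) i h ≤ 1 := by
  have hsum := congrFun (sum_range_firstPassage hP.2 j k) i
  have hnonneg : 0 ≤ ∑ l ∈ range k, firstPassage P j l i :=
    sum_nonneg fun l _ => firstPassage_nonneg hP.1 j l i
  simp only [Finset.sum_apply, Pi.sub_apply, Pi.one_apply, mulVec, dotProduct, mul_one] at hsum
  linarith

lemma sum_range_firstPassage_le_one (hP : P ∈ rowStochastic ℝ ι) (j : ι) (K : ℕ) (i : ι) :
    ∑ k ∈ range K, firstPassage P j k i ≤ 1 := by
  rw [← Finset.sum_apply, sum_range_firstPassage hP.2]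
  refine sub_le_self _ (sum_nonneg fun h _ => ?_)
  exact mul_nonneg (taboo_pow_nonneg hP.1 j K i h) zero_le_one

lemma tendsto_firstPassage (hP : P ∈ rowStochastic ℝ ι) (j i : ι) :
    Tendsto (fun k => firstPassage P j k i) atTop (𝓝 0) :=
  (summable_of_sum_range_le (fun k => firstPassage_nonneg hP.1 j k i)
    fun K => sum_range_firstPassage_le_one hP j K i).tendsto_atTop_zero

lemma tendsto_taboo_pow_mul (hP : P ∈ rowStochastic ℝ ι) (j i h : ι) :
    Tendsto (fun k => (taboo P j ^ k) i h * P h j) atTop (𝓝 0) := by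
  have hnonneg := fun k l => mul_nonneg (taboo_pow_nonneg hP.1 j k i l) (hP.1 l j)
  exact squeeze_zero (fun k => hnonneg k h)
    (fun k => single_le_sum (fun l _ => hnonneg k l) (mem_univ h)) (tendsto_firstPassage hP j i)

lemma tendsto_dotProduct_taboo_pow_negMulLog_col (hP : P ∈ rowStochastic ℝ ι) (p : ι → ℝ)
    (j : ι) :
    Tendsto (fun k => p ⬝ᵥ (taboo P j ^ k *ᵥ fun h => negMulLog (P h j))) atTop (𝓝 0) := by
  have hterm (i h : ι) :
      Tendsto (fun k => (taboo P j ^ k) i h * negMulLog (P h j)) atTop (𝓝 0) := by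
    simpa [negMulLog, mul_assoc] using
      (tendsto_taboo_pow_mul hP j i h).mul_const (-Real.log (P h j))
  have hrow (i : ι) := tendsto_finsetSum univ fun h _ => hterm i h
  simpa [dotProduct, mulVec] using
    tendsto_finsetSum univ fun i _ => (hrow i).const_mul (p i)

/-- The entropy of the distribution of the return time to each state, `H(T_{ii})`. -/
noncomputable def returnTimeEntropy (P : Matrix ι ι ℝ) (i : ι) : ℝ :=
  ∑' k, negMulLog (firstPassage P i k i)

lemma negMulLog_firstPassage_nonneg (hP : P ∈ rowStochastic ℝ ι) (j : ι) (k : ℕ) (i : ι) :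
    0 ≤ negMulLog (firstPassage P j k i) := by
  have hnonneg := fun l => firstPassage_nonneg hP.1 j l i
  refine negMulLog_nonneg (hnonneg k) ?_
  exact (single_le_sum (fun l _ => hnonneg l) (self_mem_range_succ k)).trans
    (sum_range_firstPassage_le_one hP j (k + 1) i)

lemma negMulLog_firstPassage_succ_le (hP : ∀ i h, 0 ≤ P i h) (j : ι) (k : ℕ) (i : ι) :
    negMulLog (firstPassage P j (k + 1) i) ≤
      ∑ h, (firstPassage P j k h * negMulLog (taboo P j i h) +
        taboo P j i h * negMulLog (firstPassage P j k h)) := by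
  simp_rw [← negMulLog_mul, firstPassage_succ]
  exact negMulLog_sum_le_sum_negMulLog fun h _ =>
    mul_nonneg (taboo_nonneg hP j i h) (firstPassage_nonneg hP j k h)

lemma sum_negMulLog_taboo_add (P : Matrix ι ι ℝ) (j i : ι) :
    ∑ h, negMulLog (taboo P j i h) + negMulLog (P i j) = transitionEntropy P i := by
  rw [transitionEntropy, ← sum_erase_add univ _ (mem_univ j)]
  simp [taboo_apply, apply_ite negMulLog, sum_ite, filter_ne']

lemma sum_range_succ_negMulLog_firstPassage_le (hP : P ∈ rowStochastic ℝ ι) (j : ι) (K : ℕ)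
    (i : ι) :
    ∑ k ∈ range (K + 1), negMulLog (firstPassage P j k i) ≤
      transitionEntropy P i +
        (taboo P j *ᵥ fun h => ∑ k ∈ range K, negMulLog (firstPassage P j k h)) i := by
  have htaboo_le_one (h : ι) : taboo P j i h ≤ 1 := by
    rw [taboo_apply]
    split_ifs
    exacts [zero_le_one, le_one_of_mem_rowStochastic hP]
  calc ∑ k ∈ range (K + 1), negMulLog (firstPassage P j k i)
      ≤ ∑ k ∈ range K, ∑ h, (firstPassage P j k h * negMulLog (taboo P j i h) +
          taboo P j i h * negMulLog (firstPassage P j k h)) + negMulLog (P i j) := by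
        rw [sum_range_succ', firstPassage_zero, col_apply]
        gcongr with k
        exact negMulLog_firstPassage_succ_le hP.1 j k i
    _ = ∑ h, (∑ k ∈ range K, firstPassage P j k h) * negMulLog (taboo P j i h) +
          negMulLog (P i j) +
          (taboo P j *ᵥ fun h => ∑ k ∈ range K, negMulLog (firstPassage P j k h)) i := by
        rw [sum_comm]
        simp_rw [mulVec, dotProduct, sum_add_distrib, sum_mul, mul_sum]
        ring
    _ ≤ ∑ h, negMulLog (taboo P j i h) + negMulLog (P i j) +
          (taboo P j *ᵥ fun h => ∑ k ∈ range K, negMulLog (firstPassage P j k h)) i := by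
        gcongr with h
        exact mul_le_of_le_one_left
          (negMulLog_nonneg (taboo_nonneg hP.1 j i h) (htaboo_le_one h))
          (sum_range_firstPassage_le_one hP j K h)
    _ = _ := by rw [sum_negMulLog_taboo_add]

lemma mul_sum_range_negMulLog_firstPassage_le (hP : P ∈ rowStochastic ℝ ι) (hp0 : 0 ≤ p)
    (hp : p ᵥ* P = p) (j : ι) (K : ℕ) :
    p j * ∑ k ∈ range K, negMulLog (firstPassage P j k j) ≤ p ⬝ᵥ transitionEntropy P := by
  let S (K : ℕ) (i : ι) : ℝ := ∑ k ∈ range K, negMulLog (firstPassage P j k i)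
  have hmono : p ⬝ᵥ S K ≤ p ⬝ᵥ S (K + 1) := by
    refine dotProduct_le_dotProduct_of_nonneg_left (fun i => ?_) hp0
    exact sum_le_sum_of_subset_of_nonneg (range_mono K.le_succ)
      fun k _ _ => negMulLog_firstPassage_nonneg hP j k i
  have hstep : p ⬝ᵥ S (K + 1) ≤ p ⬝ᵥ transitionEntropy P + (p ⬝ᵥ S K - p j * S K j) := by
    calc p ⬝ᵥ S (K + 1) ≤ p ⬝ᵥ (transitionEntropy P + taboo P j *ᵥ S K) :=
          dotProduct_le_dotProduct_of_nonneg_left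
            (fun i => sum_range_succ_negMulLog_firstPassage_le hP j K i) hp0
      _ = p ⬝ᵥ transitionEntropy P + (p ⬝ᵥ S K - p j * S K j) := by
          rw [dotProduct_add, dotProduct_mulVec, vecMul_taboo hp, sub_dotProduct,
            single_dotProduct]
  change p j * S K j ≤ _
  linarith

lemma summable_mul_negMulLog_firstPassage (hP : P ∈ rowStochastic ℝ ι) (hp0 : 0 ≤ p)
    (hp : p ᵥ* P = p) (j : ι) :
    Summable fun k => p j * negMulLog (firstPassage P j k j) := by
  refine summable_of_sum_range_le (c := p ⬝ᵥ transitionEntropy P)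
    (fun k => mul_nonneg (hp0 j) (negMulLog_firstPassage_nonneg hP j k j)) fun K => ?_
  rw [← mul_sum]
  exact mul_sum_range_negMulLog_firstPassage_le hP hp0 hp j K

lemma tendsto_mul_sum_range_negMulLog_firstPassage (hP : P ∈ rowStochastic ℝ ι) (hp0 : 0 ≤ p)
    (hp : p ᵥ* P = p) (j : ι) :
    Tendsto (fun K => p j * ∑ k ∈ range K, negMulLog (firstPassage P j k j)) atTop
      (𝓝 (p j * returnTimeEntropy P j)) := by
  simp only [returnTimeEntropy, ← tsum_mul_left, mul_sum]
  exact (summable_mul_negMulLog_firstPassage hP hp0 hp j).hasSum.tendsto_sum_nat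

lemma mul_returnTimeEntropy_le (hP : P ∈ rowStochastic ℝ ι) (hp0 : 0 ≤ p) (hp : p ᵥ* P = p)
    (j : ι) : p j * returnTimeEntropy P j ≤ p ⬝ᵥ transitionEntropy P :=
  le_of_tendsto' (tendsto_mul_sum_range_negMulLog_firstPassage hP hp0 hp j)
    (mul_sum_range_negMulLog_firstPassage_le hP hp0 hp j)

lemma taboo_pow_mulVec_negMulLog_col_le (hP : P ∈ rowStochastic ℝ ι) (j : ι) (k : ℕ) (i : ι) :
    (taboo P j ^ k *ᵥ fun h => negMulLog (P h j)) i ≤ negMulLog (firstPassage P j k i) :=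
  sum_mul_le_map_sum_smul_of_concaveOn concaveOn_negMulLog Set.self_mem_Ici negMulLog_zero.ge
    (fun h _ => taboo_pow_nonneg hP.1 j k i h) (sum_taboo_pow_le_one hP j k i)
    fun h _ => hP.1 h j

lemma dotProduct_negMulLog_col_le (hP : P ∈ rowStochastic ℝ ι) (hp0 : 0 ≤ p) (hp : p ᵥ* P = p)
    (j : ι) : p ⬝ᵥ (fun i => negMulLog (P i j)) ≤ p j * returnTimeEntropy P j := by
  have hlim := (tendsto_mul_sum_range_negMulLog_firstPassage hP hp0 hp j).add
    (tendsto_dotProduct_taboo_pow_negMulLog_col hP p j)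
  rw [add_zero] at hlim
  refine ge_of_tendsto' hlim fun K => ?_
  rw [dotProduct_eq_sum_range_taboo_pow_add hp j _ K]
  gcongr with k
  · exact hp0 j
  · exact taboo_pow_mulVec_negMulLog_col_le hP j k j

end FirstPassage

theorem return_time_entropy_vs_entropy_rate_general {ι : Type*} [Fintype ι] [DecidableEq ι]
    {P : Matrix ι ι ℝ} {p : ι → ℝ} (hP : P ∈ rowStochastic ℝ ι) (hp0 : 0 ≤ p)
    (hp : p ᵥ* P = p) :
    p ⬝ᵥ transitionEntropy P ≤ p ⬝ᵥ returnTimeEntropy P ∧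
      p ⬝ᵥ returnTimeEntropy P ≤ Fintype.card ι * (p ⬝ᵥ transitionEntropy P) := by
  constructor
  · rw [dotProduct_transitionEntropy]
    exact sum_le_sum fun j _ => dotProduct_negMulLog_col_le hP hp0 hp j
  · rw [← nsmul_eq_mul]
    exact sum_le_card_nsmul univ _ _ fun j _ => mul_returnTimeEntropy_le hP hp0 hp j

section Fin

variable {n : ℕ} {Adj : Fin n → Fin n → Prop} {pivec : Fin n → ℝ} {ε : ℝ}
  {P : Matrix (Fin n) (Fin n) ℝ}

lemma mem_rowStochastic_of_mem_conf (hε : 0 ≤ ε) (hP : P ∈ Conf Adj pivec ε) :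
    P ∈ rowStochastic ℝ (Fin n) := by
  obtain ⟨hedge, hnonedge, hrow, -⟩ := hP
  refine mem_rowStochastic_iff_sum.2 ⟨fun i j => ?_, hrow⟩
  by_cases hij : Adj i j
  · exact hε.trans (hedge i j hij)
  · exact (hnonedge i j hij).ge

lemma vecMul_eq_of_mem_conf (hP : P ∈ Conf Adj pivec ε) : pivec ᵥ* P = pivec :=
  funext hP.2.2.2

lemma IsHittingProbUnit.eq_firstPassage {F : ℕ → Fin n → Fin n → ℝ} (hF : IsHittingProbUnit P F)
    (k : ℕ) (i j : Fin n) : F (k + 1) i j = firstPassage P j k i := by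
  induction k generalizing i with
  | zero => rw [hF.1, firstPassage_zero, col_apply]
  | succ k ih =>
    rw [hF.2 (k + 2) (Nat.le_add_left 2 k), firstPassage_succ]
    simp [mulVec, dotProduct, taboo_apply, ite_mul, ih]

end Fin

/-- for unitary travel times, the return time entropy `J(P)`
and the entropy rate satisfy `H_rate(P) ≤ J(P) ≤ n·H_rate(P)` on the
`ε`-conforming set. -/
theorem return_time_entropy_vs_entropy_rate {n : ℕ}
    (Adj : Fin n → Fin n → Prop) (pivec : Fin n → ℝ) (ε : ℝ)
    (hconn : ∀ i j, Relation.ReflTransGen Adj i j)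
    (hpi : ∀ i, 0 < pivec i) (hpisum : ∑ i, pivec i = 1)
    (hε : 0 < ε) (hne : (Conf Adj pivec ε).Nonempty)
    (F : Matrix (Fin n) (Fin n) ℝ → ℕ → Fin n → Fin n → ℝ)
    (hF : ∀ P ∈ Conf Adj pivec ε, IsHittingProbUnit P (F P)) :
    ∀ P ∈ Conf Adj pivec ε,
      entropyRate pivec P ≤
          (∑ i : Fin n, pivec i * ∑' k : ℕ, Real.negMulLog (F P (k + 1) i i)) ∧
        (∑ i : Fin n, pivec i * ∑' k : ℕ, Real.negMulLog (F P (k + 1) i i)) ≤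
          (n : ℝ) * entropyRate pivec P := by
  intro P hP
  have hbounds := return_time_entropy_vs_entropy_rate_general
    (mem_rowStochastic_of_mem_conf hε.le hP) (fun i => (hpi i).le) (vecMul_eq_of_mem_conf hP)
  simpa only [dotProduct, transitionEntropy, returnTimeEntropy, entropyRate,
    ← (hF P hP).eq_firstPassage, Fintype.card_fin] using hbounds
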